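/- arXiv:1112.2133 — 4 statements merged into one kernel-verified Lean document; each statement's English description precedes it below -/
import Mathlib

section
/- Wigner's theorem: Let H be a complex Hilbert space and let φ : ℙH → ℙH be a bijection of the projective space of H that preserves transition probabilities, i.e. p(φ(L₁), φ(L₂)) = p(L₁, L₂) for all lines L₁, L₂ ∈ ℙH. Then there exists a map S : H → H which is either a unitary operator or an antiunitary operator such that φ(ℂ·ψ) = ℂ·S(ψ) for every nonzero vector ψ ∈ H. -/
open scoped InnerProductSpace

/-- The transition probability between two states (lines) in projective Hilbert space:
`p(L₁, L₂) = |⟨ψ₁, ψ₂⟩|²` for unit vectors `ψᵢ ∈ Lᵢ`. -/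
noncomputable def transProb {H : Type*} [NormedAddCommGroup H] [InnerProductSpace ℂ H]
    (L₁ L₂ : Projectivization ℂ H) : ℝ :=
  ‖(⟪L₁.rep, L₂.rep⟫_ℂ)‖ ^ 2 / (‖L₁.rep‖ ^ 2 * ‖L₂.rep‖ ^ 2)

/-- `S : H → H` is a unitary operator. -/
def IsUnitaryOp {H : Type*} [NormedAddCommGroup H] [InnerProductSpace ℂ H]
    (S : H → H) : Prop :=
  Function.Bijective S ∧
    (∀ ψ₁ ψ₂, S (ψ₁ + ψ₂) = S ψ₁ + S ψ₂) ∧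
    (∀ (c : ℂ) (ψ : H), S (c • ψ) = c • S ψ) ∧
    (∀ ψ₁ ψ₂, (⟪S ψ₁, S ψ₂⟫_ℂ) = ⟪ψ₁, ψ₂⟫_ℂ)

/-- `S : H → H` is an antiunitary operator: a bijective ℝ-linear map which is
conjugate-linear and conjugates inner products. -/
def IsAntiunitaryOp {H : Type*} [NormedAddCommGroup H] [InnerProductSpace ℂ H]
    (S : H → H) : Prop :=
  Function.Bijective S ∧
    (∀ ψ₁ ψ₂, S (ψ₁ + ψ₂) = S ψ₁ + S ψ₂) ∧
    (∀ (c : ℂ) (ψ : H), S (c • ψ) = (starRingEnd ℂ c) • S ψ) ∧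
    (∀ ψ₁ ψ₂, (⟪S ψ₁, S ψ₂⟫_ℂ) = starRingEnd ℂ (⟪ψ₁, ψ₂⟫_ℂ))

/-!
Choosing in each line `φ (ℂ ∙ v)` a vector `T v` of the same norm as `v` gives a map `T : H → K`
with `‖⟪T v, T w⟫‖ = ‖⟪v, w⟫‖`. Fix a unit vector `e`. In the affine charts `e + x`, `x ⟂ e`, and
`T e + y`, `y ⟂ T e`, of the two projective spaces, `T` becomes a map `g` with
`‖1 + ⟪g x, g y⟫‖ = ‖1 + ⟪x, y⟫‖`. This condition is rigid: it makes `g` commute with scaling by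
`2`, and replacing `x` by `2 • x` separates `re ⟪g x, g y⟫` from `‖⟪g x, g y⟫‖`. Hence `g` is an
isometry fixing `0`, so it is `ℝ`-linear by strict convexity. Equality in Cauchy–Schwarz then
forces `g (I • x) = ± I • g x`, with one sign throughout because a vector space is not the union of
two proper subspaces. Extending `g` by `e ↦ T e` gives the operator.
-/

section Chart

variable {𝕜 E F : Type*} [RCLike 𝕜]
  [NormedAddCommGroup E] [InnerProductSpace 𝕜 E] [NormedAddCommGroup F] [InnerProductSpace 𝕜 F]

theorem mem_span_singleton_of_norm_inner_eq_norm_mul_norm {x y : E} (hy : y ≠ 0)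
    (h : ‖⟪x, y⟫_𝕜‖ = ‖x‖ * ‖y‖) : x ∈ 𝕜 ∙ y := by
  rw [norm_inner_symm, mul_comm] at h
  have h' : y = 0 ∨ x ∈ 𝕜 ∙ y := ((norm_inner_eq_norm_tfae 𝕜 y x).out 0 3).1 h
  exact h'.resolve_left hy

theorem norm_one_add_sq (z : 𝕜) : ‖1 + z‖ ^ 2 = 1 + 2 * RCLike.re z + ‖z‖ ^ 2 := by
  simpa using norm_add_sq (𝕜 := 𝕜) (1 : 𝕜) z

variable (𝕜) in
/-- The property of a map read in the affine charts `e + eᗮ` and `e' + e'ᗮ` that corresponds to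
preservation of transition probabilities: `1 + ⟪x, y⟫` is the inner product of `e + x` and
`e + y`. -/
def PreservesNormOneAddInner (g : E → F) : Prop :=
  ∀ x y, ‖1 + ⟪g x, g y⟫_𝕜‖ = ‖1 + ⟪x, y⟫_𝕜‖

namespace PreservesNormOneAddInner

variable {g : E → F} (hg : PreservesNormOneAddInner 𝕜 g)
include hg

theorem two_mul_re_add_norm_sq (x y : E) :
    2 * RCLike.re ⟪g x, g y⟫_𝕜 + ‖⟪g x, g y⟫_𝕜‖ ^ 2 =
      2 * RCLike.re ⟪x, y⟫_𝕜 + ‖⟪x, y⟫_𝕜‖ ^ 2 := by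
  have h := congrArg (· ^ 2) (hg x y)
  simp only [norm_one_add_sq] at h
  linarith

theorem norm_map (x : E) : ‖g x‖ = ‖x‖ := by
  have h := hg.two_mul_re_add_norm_sq x x
  simp only [inner_self_eq_norm_sq_to_K, ← RCLike.ofReal_pow, RCLike.ofReal_re,
    RCLike.norm_ofReal, sq_abs] at h
  have hsq : ‖g x‖ ^ 2 = ‖x‖ ^ 2 := by
    nlinarith [sq_nonneg ‖g x‖, sq_nonneg ‖x‖]
  exact (sq_eq_sq₀ (norm_nonneg _) (norm_nonneg _)).1 hsq

theorem re_inner_map_smul_self {t : ℝ} (ht : 0 ≤ t) (x : E) :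
    RCLike.re ⟪g ((t : 𝕜) • x), g x⟫_𝕜 = t * ‖x‖ ^ 2 := by
  have hinner : ⟪(t : 𝕜) • x, x⟫_𝕜 = ((t * ‖x‖ ^ 2 : ℝ) : 𝕜) := by
    simp [inner_smul_left]
  have hsum := hg.two_mul_re_add_norm_sq ((t : 𝕜) • x) x
  rw [hinner, RCLike.ofReal_re, RCLike.norm_ofReal, sq_abs] at hsum
  have hnorm : ‖⟪g ((t : 𝕜) • x), g x⟫_𝕜‖ ≤ t * ‖x‖ ^ 2 :=
    calc ‖⟪g ((t : 𝕜) • x), g x⟫_𝕜‖ ≤ ‖g ((t : 𝕜) • x)‖ * ‖g x‖ := norm_inner_le_norm _ _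
      _ = t * ‖x‖ ^ 2 := by
        rw [hg.norm_map, hg.norm_map, norm_smul, RCLike.norm_of_nonneg ht]
        ring
  have hre := RCLike.re_le_norm ⟪g ((t : 𝕜) • x), g x⟫_𝕜
  have hnorm_sq := pow_le_pow_left₀ (norm_nonneg _) hnorm 2
  linarith

theorem map_smul_of_nonneg {t : ℝ} (ht : 0 ≤ t) (x : E) :
    g ((t : 𝕜) • x) = (t : 𝕜) • g x := by
  have h : ‖g ((t : 𝕜) • x) - (t : 𝕜) • g x‖ ^ 2 = 0 := by
    rw [norm_sub_sq (𝕜 := 𝕜), inner_smul_right, RCLike.re_ofReal_mul,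
      hg.re_inner_map_smul_self ht, norm_smul, hg.norm_map, hg.norm_map, norm_smul,
      RCLike.norm_of_nonneg ht]
    ring
  exact sub_eq_zero.1 (norm_eq_zero.1 (pow_eq_zero_iff two_ne_zero |>.1 h))

theorem re_inner_map_map (x y : E) : RCLike.re ⟪g x, g y⟫_𝕜 = RCLike.re ⟪x, y⟫_𝕜 := by
  have h₁ := hg.two_mul_re_add_norm_sq x y
  have h₂ := hg.two_mul_re_add_norm_sq (((2 : ℝ) : 𝕜) • x) y
  simp only [hg.map_smul_of_nonneg zero_le_two, inner_smul_left, RCLike.conj_ofReal,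
    RCLike.re_ofReal_mul, norm_mul, RCLike.norm_of_nonneg zero_le_two] at h₂
  linarith

theorem norm_inner_map_map (x y : E) : ‖⟪g x, g y⟫_𝕜‖ = ‖⟪x, y⟫_𝕜‖ := by
  have h := hg.two_mul_re_add_norm_sq x y
  rw [hg.re_inner_map_map, add_right_inj] at h
  exact (sq_eq_sq₀ (norm_nonneg _) (norm_nonneg _)).1 h

theorem isometry : Isometry g := by
  refine Isometry.of_dist_eq fun x y ↦ ?_
  rw [dist_eq_norm, dist_eq_norm, ← sq_eq_sq₀ (norm_nonneg _) (norm_nonneg _),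
    norm_sub_sq (𝕜 := 𝕜), norm_sub_sq (𝕜 := 𝕜), hg.norm_map, hg.norm_map, hg.re_inner_map_map]

end PreservesNormOneAddInner

end Chart

section RealLinear

theorem exists_linearIsometry_coe_eq_of_isometry {E F : Type*}
    [NormedAddCommGroup E] [NormedSpace ℝ E]
    [NormedAddCommGroup F] [NormedSpace ℝ F] [StrictConvexSpace ℝ F]
    {g : E → F} (hg : Isometry g) (hg₀ : g 0 = 0) : ∃ f : E →ₗᵢ[ℝ] F, ⇑f = g := by
  refine ⟨hg.affineIsometryOfStrictConvexSpace.linearIsometry, funext fun x ↦ ?_⟩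
  simpa [hg₀] using (hg.affineIsometryOfStrictConvexSpace.map_vsub x 0)

theorem map_smulₛₗ_of_map_I_smul {E F : Type*} [AddCommGroup E] [Module ℂ E]
    [AddCommGroup F] [Module ℂ F] {σ : ℂ →+* ℂ} (hσ : ∀ r : ℝ, σ r = r) {f : E →ₗ[ℝ] F}
    (hf : ∀ x, f (Complex.I • x) = σ Complex.I • f x) (c : ℂ) (x : E) :
    f (c • x) = σ c • f x :=
  calc f (c • x) = f (c.re • x + c.im • Complex.I • x) := by
        conv_lhs => rw [← Complex.re_add_im c, add_smul, mul_smul]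
        rfl
    _ = (c.re : ℂ) • f x + (c.im : ℂ) • σ Complex.I • f x := by
        rw [map_add, map_smul, map_smul, hf]
        rfl
    _ = σ c • f x := by
        conv_rhs => rw [← Complex.re_add_im c, map_add, map_mul, hσ, hσ, add_smul, mul_smul]

variable {E F : Type*} [NormedAddCommGroup E] [InnerProductSpace ℂ E]
  [NormedAddCommGroup F] [InnerProductSpace ℂ F] {f : E →ₗᵢ[ℝ] F}

theorem map_I_smul_eq_or_eq_neg (hf : ∀ x y, ‖⟪f x, f y⟫_ℂ‖ = ‖⟪x, y⟫_ℂ‖) (x : E) :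
    f (Complex.I • x) = Complex.I • f x ∨ f (Complex.I • x) = -Complex.I • f x := by
  rcases eq_or_ne x 0 with rfl | hx
  · simp
  have hfx : f x ≠ 0 := (map_ne_zero_iff f f.injective).2 hx
  have hnorm : ‖⟪f (Complex.I • x), f x⟫_ℂ‖ = ‖f (Complex.I • x)‖ * ‖f x‖ := by
    simp [hf, norm_smul, sq]
  obtain ⟨c, hc⟩ := Submodule.mem_span_singleton.1
    (mem_span_singleton_of_norm_inner_eq_norm_mul_norm hfx hnorm)
  have hc_norm : ‖c‖ = 1 := by
    have := congrArg norm hc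
    rw [norm_smul, f.norm_map, f.norm_map, norm_smul, Complex.norm_I, one_mul] at this
    exact (mul_eq_right₀ (norm_ne_zero_iff.2 hx)).1 this
  have hc_re : c.re = 0 := by
    let := InnerProductSpace.complexToReal (G := E)
    let := InnerProductSpace.complexToReal (G := F)
    have h : (⟪f x, f (Complex.I • x)⟫_ℂ).re = (⟪x, Complex.I • x⟫_ℂ).re :=
      f.inner_map_map x (Complex.I • x)
    rw [← hc, inner_smul_right, inner_smul_right] at h
    simpa [hx, ← Complex.ofReal_pow] using h
  have hc_im : c.im = 1 ∨ c.im = -1 := by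
    rw [← sq_eq_one_iff, ← one_pow 2, ← hc_norm, Complex.sq_norm, Complex.normSq_apply, hc_re]
    ring
  rw [← hc]
  refine hc_im.imp (fun h ↦ ?_) (fun h ↦ ?_) <;> congr 1 <;> apply Complex.ext <;> simp [hc_re, h]

theorem forall_map_I_smul_eq_or_forall_eq_neg (hf : ∀ x y, ‖⟪f x, f y⟫_ℂ‖ = ‖⟪x, y⟫_ℂ‖) :
    (∀ x, f (Complex.I • x) = Complex.I • f x) ∨
      ∀ x, f (Complex.I • x) = -Complex.I • f x := by
  let linearLocus := LinearMap.eqLocus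
    (f.toLinearMap ∘ₗ (Complex.I • LinearMap.id)) (Complex.I • f.toLinearMap)
  let antilinearLocus := LinearMap.eqLocus
    (f.toLinearMap ∘ₗ (Complex.I • LinearMap.id)) (-Complex.I • f.toLinearMap)
  have hcover : ((⊤ : Submodule ℝ E) : Set E) ⊆ linearLocus ∪ antilinearLocus :=
    fun x _ ↦ map_I_smul_eq_or_eq_neg hf x
  exact (AddSubgroupClass.subset_union.1 hcover).imp
    (fun h x ↦ h (Submodule.mem_top (x := x))) (fun h x ↦ h (Submodule.mem_top (x := x)))

theorem PreservesNormOneAddInner.exists_linearIsometry_or_antilinearIsometry {g : E → F}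
    (hg : PreservesNormOneAddInner ℂ g) :
    (∃ U : E →ₗᵢ[ℂ] F, ⇑U = g) ∨ ∃ A : E →ₛₗᵢ[starRingEnd ℂ] F, ⇑A = g := by
  let := InnerProductSpace.complexToReal (G := F)
  have hg₀ : g 0 = 0 := by simpa using hg.norm_map 0
  obtain ⟨f, rfl⟩ := exists_linearIsometry_coe_eq_of_isometry hg.isometry hg₀
  rcases forall_map_I_smul_eq_or_forall_eq_neg hg.norm_inner_map_map with hI | hI
  · exact .inl ⟨⟨⟨f.toLinearMap.toAddHom,
      map_smulₛₗ_of_map_I_smul (σ := .id ℂ) (fun _ ↦ rfl) hI⟩, f.norm_map⟩, rfl⟩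
  · have hσI : ∀ x, f (Complex.I • x) = starRingEnd ℂ Complex.I • f x := by
      simpa only [Complex.conj_I] using hI
    exact .inr ⟨⟨⟨f.toLinearMap.toAddHom,
      map_smulₛₗ_of_map_I_smul Complex.conj_ofReal hσI⟩, f.norm_map⟩, rfl⟩

theorem inner_map_map_of_antilinearIsometry (A : E →ₛₗᵢ[starRingEnd ℂ] F) (x y : E) :
    ⟪A x, A y⟫_ℂ = starRingEnd ℂ ⟪x, y⟫_ℂ := by
  have hI : Complex.I • A y = A (-Complex.I • y) := by
    rw [map_smulₛₗ, map_neg, Complex.conj_I, neg_neg]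
  simp only [inner_eq_sum_norm_sq_div_four (𝕜 := ℂ), RCLike.I_to_complex, hI, ← map_add, ← map_sub,
    A.norm_map, neg_smul, sub_neg_eq_add, ← sub_eq_add_neg]
  simp only [map_div₀, map_add, map_sub, map_mul, map_pow, RCLike.conj_ofReal, Complex.conj_I,
    map_ofNat]
  ring

end RealLinear

section Extension

variable {𝕜 H K : Type*} [RCLike 𝕜] [NormedAddCommGroup H] [InnerProductSpace 𝕜 H]
  [NormedAddCommGroup K] [InnerProductSpace 𝕜 K]

theorem norm_sq_eq_norm_inner_sq_add {e : H} (he : ‖e‖ = 1) (v : H) :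
    ‖v‖ ^ 2 = ‖⟪e, v⟫_𝕜‖ ^ 2 + ‖(𝕜 ∙ e)ᗮ.orthogonalProjectionOnto v‖ ^ 2 := by
  have hproj : ‖(𝕜 ∙ e).orthogonalProjectionOnto v‖ = ‖⟪e, v⟫_𝕜‖ := by
    rw [Submodule.coe_norm, ← Submodule.starProjection_apply,
      Submodule.starProjection_unit_singleton 𝕜 he, norm_smul, he, mul_one]
  rw [Submodule.norm_sq_eq_add_norm_sq_projection v (𝕜 ∙ e), hproj]

theorem inner_add_orthogonal_eq_one {e : H} (he : ‖e‖ = 1) (x : (𝕜 ∙ e)ᗮ) :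
    ⟪e, e + x⟫_𝕜 = 1 := by
  rw [inner_add_right, Submodule.mem_orthogonal_singleton_iff_inner_right.1 x.2,
    inner_self_eq_one_of_norm_eq_one he, add_zero]

theorem inner_add_orthogonal_add_orthogonal {e : H} (he : ‖e‖ = 1) (x y : (𝕜 ∙ e)ᗮ) :
    ⟪e + x, e + y⟫_𝕜 = 1 + ⟪x, y⟫_𝕜 := by
  rw [inner_add_left, inner_add_orthogonal_eq_one he, inner_add_right,
    Submodule.mem_orthogonal_singleton_iff_inner_left.1 x.2, zero_add, Submodule.coe_inner]

variable {σ : 𝕜 →+* 𝕜} [RingHomIsometric σ]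

theorem exists_isometry_extension {e : H} {e' : K} (he : ‖e‖ = 1) (he' : ‖e'‖ = 1)
    (g : (𝕜 ∙ e)ᗮ →ₛₗᵢ[σ] (𝕜 ∙ e')ᗮ) :
    ∃ S : H →ₛₗᵢ[σ] K, ∀ x : (𝕜 ∙ e)ᗮ, S (e + x) = e' + g x := by
  let P := (𝕜 ∙ e)ᗮ.orthogonalProjectionOnto
  let S : H →ₛₗ[σ] K :=
    { toFun v := σ ⟪e, v⟫_𝕜 • e' + g (P v)
      map_add' v w := by
        simp only [inner_add_right, map_add, add_smul, Submodule.coe_add]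
        abel
      map_smul' c v := by
        simp only [inner_smul_right, map_mul, mul_smul, map_smul, map_smulₛₗ, Submodule.coe_smul,
          smul_add] }
  have hS (v : H) : ‖S v‖ = ‖v‖ := by
    have horth : ⟪σ ⟪e, v⟫_𝕜 • e', (g (P v) : K)⟫_𝕜 = 0 := by
      rw [inner_smul_left, Submodule.mem_orthogonal_singleton_iff_inner_right.1 (g (P v)).2,
        mul_zero]
    have hsq : ‖S v‖ ^ 2 = ‖v‖ ^ 2 :=
      calc ‖S v‖ ^ 2 = ‖σ ⟪e, v⟫_𝕜 • e'‖ ^ 2 + ‖(g (P v) : K)‖ ^ 2 := by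
            simp only [sq]
            exact norm_add_sq_eq_norm_sq_add_norm_sq_of_inner_eq_zero _ _ horth
        _ = ‖⟪e, v⟫_𝕜‖ ^ 2 + ‖P v‖ ^ 2 := by
            rw [norm_smul, he', mul_one, RingHomIsometric.norm_map, ← Submodule.coe_norm,
              g.norm_map]
        _ = ‖v‖ ^ 2 := (norm_sq_eq_norm_inner_sq_add he v).symm
    exact (sq_eq_sq₀ (norm_nonneg _) (norm_nonneg _)).1 hsq
  refine ⟨⟨S, hS⟩, fun x ↦ ?_⟩
  have hP : P (e + x) = x := by
    rw [map_add, Submodule.orthogonalProjectionOnto_mem_subspace_eq_self,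
      Submodule.orthogonalProjectionOnto_orthogonalComplement_singleton_eq_zero, zero_add]
  change σ ⟪e, e + x⟫_𝕜 • e' + (g (P (e + x)) : K) = e' + g x
  rw [inner_add_orthogonal_eq_one he, hP, map_one, one_smul]

end Extension

section PreservesNormInner

variable {𝕜 H K : Type*} [RCLike 𝕜] [NormedAddCommGroup H] [InnerProductSpace 𝕜 H]
  [NormedAddCommGroup K] [InnerProductSpace 𝕜 K]

variable (𝕜) in
/-- A map between inner product spaces preserving the absolute values of inner products: the
vector form of a map of projective spaces preserving transition probabilities. -/
def PreservesNormInner (T : H → K) : Prop :=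
  ∀ v w, ‖⟪T v, T w⟫_𝕜‖ = ‖⟪v, w⟫_𝕜‖

namespace PreservesNormInner

variable {T : H → K} (hT : PreservesNormInner 𝕜 T) {e : H} (he : ‖e‖ = 1)

include hT in
theorem norm_map (v : H) : ‖T v‖ = ‖v‖ := by
  have h := hT v v
  simp only [inner_self_eq_norm_sq_to_K, norm_pow, RCLike.norm_ofReal, abs_norm] at h
  exact (sq_eq_sq₀ (norm_nonneg _) (norm_nonneg _)).1 h

include hT he

theorem exists_chart_apply (x : (𝕜 ∙ e)ᗮ) :
    ∃ y : (𝕜 ∙ T e)ᗮ, ∃ c : 𝕜, ‖c‖ = 1 ∧ T e + y = c • T (e + x) := by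
  set a := ⟪T e, T (e + x)⟫_𝕜 with ha
  have ha_norm : ‖a‖ = 1 := by rw [ha, hT, inner_add_orthogonal_eq_one he, norm_one]
  have ha_ne : a ≠ 0 := norm_ne_zero_iff.1 (ha_norm ▸ one_ne_zero)
  refine ⟨⟨a⁻¹ • T (e + x) - T e, ?_⟩, a⁻¹, ?_, add_sub_cancel _ _⟩
  · rw [Submodule.mem_orthogonal_singleton_iff_inner_right, inner_sub_right, inner_smul_right,
      inv_mul_cancel₀ ha_ne, inner_self_eq_one_of_norm_eq_one ((hT.norm_map e).trans he), sub_self]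
  · rw [norm_inv, ha_norm, inv_one]

theorem exists_chart : ∃ g : (𝕜 ∙ e)ᗮ → (𝕜 ∙ T e)ᗮ, PreservesNormOneAddInner 𝕜 g ∧
    ∀ x, ∃ c : 𝕜, ‖c‖ = 1 ∧ T e + g x = c • T (e + x) := by
  choose g c hc hg using hT.exists_chart_apply he
  refine ⟨g, fun x y ↦ ?_, fun x ↦ ⟨c x, hc x, hg x⟩⟩
  calc ‖1 + ⟪g x, g y⟫_𝕜‖ = ‖⟪T e + g x, T e + g y⟫_𝕜‖ := by
        rw [inner_add_orthogonal_add_orthogonal ((hT.norm_map e).trans he)]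
    _ = ‖⟪e + x, e + y⟫_𝕜‖ := by
        rw [hg, hg, inner_smul_left, inner_smul_right, norm_mul, norm_mul, RCLike.norm_conj, hc,
          hc, one_mul, one_mul, hT]
    _ = ‖1 + ⟪x, y⟫_𝕜‖ := by rw [inner_add_orthogonal_add_orthogonal he]

variable {σ : 𝕜 →+* 𝕜} [RingHomIsometric σ]

theorem norm_inner_map_eq_norm_sq {S : H →ₛₗᵢ[σ] K}
    (hS : ∀ x : (𝕜 ∙ e)ᗮ, ∃ c : 𝕜, ‖c‖ = 1 ∧ S (e + x) = c • T (e + x)) (v : H) :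
    ‖⟪T v, S v⟫_𝕜‖ = ‖v‖ ^ 2 := by
  have hchart (x : (𝕜 ∙ e)ᗮ) : ‖⟪T v, S (e + x)⟫_𝕜‖ = ‖⟪v, e + x⟫_𝕜‖ := by
    obtain ⟨c, hc, hSx⟩ := hS x
    rw [hSx, inner_smul_right, norm_mul, hc, one_mul, hT]
  rcases eq_or_ne ⟪e, v⟫_𝕜 0 with hv | hv
  · let x : (𝕜 ∙ e)ᗮ := ⟨v, Submodule.mem_orthogonal_singleton_iff_inner_right.2 hv⟩
    have hve : ⟪v, e⟫_𝕜 = 0 := inner_eq_zero_symm.1 hv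
    have hTvSe : ⟪T v, S e⟫_𝕜 = 0 := by simpa [hve] using hchart 0
    have hadd := hchart x
    rw [map_add, inner_add_right, inner_add_right, hTvSe, hve, zero_add, zero_add] at hadd
    simpa [x] using hadd
  · set a := ⟪e, v⟫_𝕜
    have hmem : a⁻¹ • v - e ∈ (𝕜 ∙ e)ᗮ := by
      rw [Submodule.mem_orthogonal_singleton_iff_inner_right, inner_sub_right, inner_smul_right,
        inv_mul_cancel₀ hv, inner_self_eq_one_of_norm_eq_one he, sub_self]
    have hscaled := hchart ⟨_, hmem⟩
    rw [add_sub_cancel, map_smulₛₗ, inner_smul_right, inner_smul_right, norm_mul, norm_mul,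
      RingHomIsometric.norm_map, mul_right_inj' (norm_ne_zero_iff.2 (inv_ne_zero hv))] at hscaled
    simpa using hscaled

theorem exists_isometry_forall_mem_span (g : (𝕜 ∙ e)ᗮ →ₛₗᵢ[σ] (𝕜 ∙ T e)ᗮ)
    (hg : ∀ x, ∃ c : 𝕜, ‖c‖ = 1 ∧ T e + g x = c • T (e + x)) :
    ∃ S : H →ₛₗᵢ[σ] K, ∀ v, T v ∈ 𝕜 ∙ S v := by
  obtain ⟨S, hS⟩ := exists_isometry_extension he ((hT.norm_map e).trans he) g
  refine ⟨S, fun v ↦ ?_⟩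
  rcases eq_or_ne v 0 with rfl | hv
  · have hT₀ : T 0 = 0 := by simpa using hT.norm_map 0
    exact hT₀ ▸ zero_mem _
  · refine mem_span_singleton_of_norm_inner_eq_norm_mul_norm
      ((map_ne_zero_iff S S.injective).2 hv) ?_
    rw [hT.norm_inner_map_eq_norm_sq he (by simpa only [hS] using hg), hT.norm_map, S.norm_map, sq]

end PreservesNormInner

end PreservesNormInner

theorem PreservesNormInner.exists_linearIsometry_or_antilinearIsometry {H K : Type*}
    [NormedAddCommGroup H] [InnerProductSpace ℂ H] [NormedAddCommGroup K] [InnerProductSpace ℂ K]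
    {T : H → K} (hT : PreservesNormInner ℂ T) :
    (∃ U : H →ₗᵢ[ℂ] K, ∀ v, T v ∈ ℂ ∙ U v) ∨
      ∃ A : H →ₛₗᵢ[starRingEnd ℂ] K, ∀ v, T v ∈ ℂ ∙ A v := by
  rcases subsingleton_or_nontrivial H with _ | _
  · refine .inl ⟨⟨0, fun v ↦ by simp [Subsingleton.elim v 0]⟩, fun v ↦ ?_⟩
    have hTv : T v = 0 := by simpa [Subsingleton.elim v 0] using hT.norm_map v
    rw [hTv]
    exact zero_mem _
  obtain ⟨e, he⟩ := exists_norm_eq H zero_le_one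
  obtain ⟨g, hg, hgT⟩ := hT.exists_chart he
  obtain ⟨U, rfl⟩ | ⟨A, rfl⟩ := hg.exists_linearIsometry_or_antilinearIsometry
  · exact .inl (hT.exists_isometry_forall_mem_span he U hgT)
  · exact .inr (hT.exists_isometry_forall_mem_span he A hgT)

section Projectivization

open LinearAlgebra.Projectivization

theorem surjective_of_projectivization_map_surjective {k l V W : Type*} [DivisionRing k]
    [DivisionRing l] [AddCommGroup V] [Module k V] [AddCommGroup W] [Module l W] {σ : k →+* l}
    [RingHomSurjective σ] {f : V →ₛₗ[σ] W} {hf : Function.Injective f}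
    (h : Function.Surjective (Projectivization.map f hf)) : Function.Surjective f := by
  intro w
  rcases eq_or_ne w 0 with rfl | hw
  · exact ⟨0, map_zero f⟩
  obtain ⟨L, hL⟩ := h (.mk l w hw)
  induction L using Projectivization.ind with
  | h v hv =>
    obtain ⟨a, ha⟩ := (Projectivization.mk_eq_mk_iff' l w (f v) hw _).1 hL.symm
    obtain ⟨b, rfl⟩ := RingHomSurjective.is_surjective (σ := σ) a
    exact ⟨b • v, by rw [map_smulₛₗ, ha]⟩

theorem eq_projectivization_map_of_forall_mem_span {k l V W : Type*} [DivisionRing k]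
    [DivisionRing l] [AddCommGroup V] [Module k V] [AddCommGroup W] [Module l W] {σ : k →+* l}
    {φ : ℙ k V → ℙ l W} {T : V → W}
    (hT : ∀ v (hv : v ≠ 0), ∃ hTv : T v ≠ 0, φ (.mk k v hv) = .mk l (T v) hTv)
    {f : V →ₛₗ[σ] W} (hf : Function.Injective f) (hTf : ∀ v, T v ∈ l ∙ f v) :
    φ = Projectivization.map f hf := by
  ext L
  induction L using Projectivization.ind with
  | h v hv =>
    obtain ⟨hTv, hφv⟩ := hT v hv
    rw [hφv, Projectivization.map_mk, Projectivization.mk_eq_mk_iff']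
    exact Submodule.mem_span_singleton.1 (hTf v)

theorem exists_norm_eq_and_mk_eq {𝕜 E : Type*} [RCLike 𝕜] [NormedAddCommGroup E]
    [NormedSpace 𝕜 E] (L : ℙ 𝕜 E) {r : ℝ} (hr : 0 < r) :
    ∃ y : E, ‖y‖ = r ∧ ∃ hy : y ≠ 0, L = .mk 𝕜 y hy := by
  have hrep : ‖L.rep‖ ≠ 0 := norm_ne_zero_iff.2 L.rep_nonzero
  have hc : ((r / ‖L.rep‖ : ℝ) : 𝕜) ≠ 0 := RCLike.ofReal_ne_zero.2 (div_ne_zero hr.ne' hrep)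
  refine ⟨((r / ‖L.rep‖ : ℝ) : 𝕜) • L.rep, ?_, smul_ne_zero hc L.rep_nonzero, ?_⟩
  · rw [norm_smul, RCLike.norm_of_nonneg (by positivity), div_mul_cancel₀ _ hrep]
  · conv_lhs => rw [← L.mk_rep]
    exact ((Projectivization.mk_eq_mk_iff' ..).2 ⟨_, rfl⟩).symm

variable {H K : Type*} [NormedAddCommGroup H] [InnerProductSpace ℂ H]
  [NormedAddCommGroup K] [InnerProductSpace ℂ K]

theorem transProb_mk_mk {v w : H} (hv : v ≠ 0) (hw : w ≠ 0) :
    transProb (.mk ℂ v hv) (.mk ℂ w hw) = ‖⟪v, w⟫_ℂ‖ ^ 2 / (‖v‖ ^ 2 * ‖w‖ ^ 2) := by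
  obtain ⟨a, ha⟩ := Projectivization.exists_smul_eq_mk_rep ℂ v hv
  obtain ⟨b, hb⟩ := Projectivization.exists_smul_eq_mk_rep ℂ w hw
  have ha_norm : ‖(a : ℂ)‖ ≠ 0 := norm_ne_zero_iff.2 a.ne_zero
  have hb_norm : ‖(b : ℂ)‖ ≠ 0 := norm_ne_zero_iff.2 b.ne_zero
  rw [transProb, ← ha, ← hb]
  simp only [Units.smul_def, inner_smul_left, inner_smul_right, norm_mul, norm_smul,
    RCLike.norm_conj]
  field_simp

theorem exists_preservesNormInner_lift {φ : ℙ ℂ H → ℙ ℂ K}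
    (hp : ∀ L₁ L₂, transProb (φ L₁) (φ L₂) = transProb L₁ L₂) :
    ∃ T : H → K, PreservesNormInner ℂ T ∧
      ∀ v (hv : v ≠ 0), ∃ hTv : T v ≠ 0, φ (.mk ℂ v hv) = .mk ℂ (T v) hTv := by
  have hrep (v : H) : ∃ y : K, ‖y‖ = ‖v‖ ∧
      ∀ hv : v ≠ 0, ∃ hy : y ≠ 0, φ (.mk ℂ v hv) = .mk ℂ y hy := by
    rcases eq_or_ne v 0 with rfl | hv
    · exact ⟨0, by simp⟩
    · obtain ⟨y, hyv, hy⟩ := exists_norm_eq_and_mk_eq (φ (.mk ℂ v hv)) (norm_pos_iff.2 hv)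
      exact ⟨y, hyv, fun _ ↦ hy⟩
  choose T hT_norm hT using hrep
  have hT_zero : T 0 = 0 := by simpa using hT_norm 0
  refine ⟨T, fun v w ↦ ?_, hT⟩
  rcases eq_or_ne v 0 with rfl | hv
  · simp [hT_zero]
  rcases eq_or_ne w 0 with rfl | hw
  · simp [hT_zero]
  obtain ⟨hTv, hφv⟩ := hT v hv
  obtain ⟨hTw, hφw⟩ := hT w hw
  have h := hp (.mk ℂ v hv) (.mk ℂ w hw)
  have hpos : ‖v‖ ^ 2 * ‖w‖ ^ 2 ≠ 0 := by positivity
  rw [hφv, hφw, transProb_mk_mk, transProb_mk_mk, hT_norm, hT_norm, div_left_inj' hpos] at h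
  exact (sq_eq_sq₀ (norm_nonneg _) (norm_nonneg _)).1 h

theorem isUnitaryOp_of_surjective {U : H →ₗᵢ[ℂ] H} (hU : Function.Surjective U) :
    IsUnitaryOp U :=
  ⟨⟨U.injective, hU⟩, map_add U, map_smul U, U.inner_map_map⟩

theorem isAntiunitaryOp_of_surjective {A : H →ₛₗᵢ[starRingEnd ℂ] H}
    (hA : Function.Surjective A) : IsAntiunitaryOp A :=
  ⟨⟨A.injective, hA⟩, map_add A, map_smulₛₗ A, inner_map_map_of_antilinearIsometry A⟩

theorem wigner_general {φ : ℙ ℂ H → ℙ ℂ K}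
    (hp : ∀ L₁ L₂, transProb (φ L₁) (φ L₂) = transProb L₁ L₂) :
    (∃ U : H →ₗᵢ[ℂ] K, φ = Projectivization.map U.toLinearMap U.injective) ∨
      ∃ A : H →ₛₗᵢ[starRingEnd ℂ] K, φ = Projectivization.map A.toLinearMap A.injective := by
  obtain ⟨T, hT, hφ⟩ := exists_preservesNormInner_lift hp
  obtain ⟨U, hU⟩ | ⟨A, hA⟩ := hT.exists_linearIsometry_or_antilinearIsometry
  · exact .inl ⟨U, eq_projectivization_map_of_forall_mem_span hφ U.injective hU⟩
  · exact .inr ⟨A, eq_projectivization_map_of_forall_mem_span hφ A.injective hA⟩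

end Projectivization

/-- **Wigner's theorem.** Every bijection of the projective space of a complex Hilbert
space preserving transition probabilities lifts to a unitary or antiunitary operator. -/
theorem wigner {H : Type*} [NormedAddCommGroup H] [InnerProductSpace ℂ H] [CompleteSpace H]
    (hdim : 2 ≤ Module.rank ℂ H)
    (φ : Projectivization ℂ H → Projectivization ℂ H) (hφ : Function.Bijective φ)
    (hp : ∀ L₁ L₂ : Projectivization ℂ H, transProb (φ L₁) (φ L₂) = transProb L₁ L₂) :
    ∃ S : H → H, (IsUnitaryOp S ∨ IsAntiunitaryOp S) ∧
      ∀ (ψ : H) (hψ : ψ ≠ 0), ∃ hSψ : S ψ ≠ 0,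
        φ (Projectivization.mk ℂ ψ hψ) = Projectivization.mk ℂ (S ψ) hSψ := by
  obtain ⟨U, rfl⟩ | ⟨A, rfl⟩ := wigner_general hp
  · have hU := isUnitaryOp_of_surjective (surjective_of_projectivization_map_surjective hφ.2)
    exact ⟨U, .inl hU, fun ψ hψ ↦ ⟨_, Projectivization.map_mk _ _ ψ hψ⟩⟩
  · have hA := isAntiunitaryOp_of_surjective (surjective_of_projectivization_map_surjective hφ.2)
    exact ⟨A, .inr hA, fun ψ hψ ↦ ⟨_, Projectivization.map_mk _ _ ψ hψ⟩⟩
end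

section
/- Let W be a complex Hilbert space with dim_ℂ W ≥ 2, and let S : W → W be an injective ℝ-linear map that maps every complex line into a complex line, i.e. for every ξ ∈ W there exists α ∈ ℂ with S(iξ) = α·S(ξ). Then either S(iξ) = i·S(ξ) for all ξ ∈ W (S is ℂ-linear) or S(iξ) = −i·S(ξ) for all ξ ∈ W (S is conjugate-linear). -/
/-!
The maps `ξ ↦ S ξ` and `ξ ↦ S (i ξ)` are additive, and the second is pointwise a multiple of the
first. If `S ξ` and `S η` are linearly independent, comparing coefficients in
`S (i (ξ + η)) = S (i ξ) + S (i η)` shows that the multipliers at `ξ`, `η` and `ξ + η` agree; as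
soon as the range of `S` is not contained in a complex line, any two multipliers can be compared in
this way, so there is a single `α` with `S (i ξ) = α S ξ`. Applying this twice gives `α² = -1`.

A real-linear injection on a space of complex dimension at least `2` has range of real dimension at
least `4`, so its range cannot lie in a complex line.
-/

section CommonMultiplier

theorem multiplier_eq_of_linearIndependent {R A M : Type*} [Semiring R] [AddZeroClass A]
    [AddCommMonoid M] [Module R M] {f g : A →+ M} (hfg : ∀ x, ∃ a : R, g x = a • f x) {x y : A}
    (hxy : LinearIndependent R ![f x, f y]) {a b : R} (ha : g x = a • f x) (hb : g y = b • f y) :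
    a = b := by
  obtain ⟨c, hc⟩ := hfg (x + y)
  have hcoeff : a • f x + b • f y = c • f x + c • f y := by
    rw [← ha, ← hb, ← map_add, hc, map_add, smul_add]
  obtain ⟨hac, hbc⟩ := hxy.eq_of_pair hcoeff
  exact hac.trans hbc.symm

variable {K A M : Type*} [DivisionRing K] [AddCommGroup M] [Module K M]

theorem linearIndependent_pair_or_of_ne_zero {x y z : M} (hxy : LinearIndependent K ![x, y])
    (hz : z ≠ 0) : LinearIndependent K ![z, x] ∨ LinearIndependent K ![z, y] := by
  by_contra! ⟨hzx, hzy⟩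
  simp only [LinearIndependent.pair_iff' hz, not_forall, not_not] at hzx hzy
  obtain ⟨a, rfl⟩ := hzx
  obtain ⟨b, rfl⟩ := hzy
  have haz : a • z ≠ 0 := hxy.ne_zero 0
  have ha : a ≠ 0 := (smul_ne_zero_iff.mp haz).1
  exact (LinearIndependent.pair_iff' haz).mp hxy (b * a⁻¹) (by
    rw [smul_smul, inv_mul_cancel_right₀ ha])

theorem exists_common_multiplier [AddZeroClass A] {f g : A →+ M}
    (hfg : ∀ x, ∃ a : K, g x = a • f x) {x y : A} (hxy : LinearIndependent K ![f x, f y]) :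
    ∃ a : K, ∀ z, g z = a • f z := by
  obtain ⟨a, hx⟩ := hfg x
  obtain ⟨b, hy⟩ := hfg y
  obtain rfl : a = b := multiplier_eq_of_linearIndependent hfg hxy hx hy
  refine ⟨a, fun z ↦ ?_⟩
  obtain ⟨c, hz⟩ := hfg z
  by_cases hfz : f z = 0
  · rw [hz, hfz, smul_zero, smul_zero]
  · obtain hzx | hzy := linearIndependent_pair_or_of_ne_zero hxy hfz
    · rw [hz, multiplier_eq_of_linearIndependent hfg hzx hz hx]
    · rw [hz, multiplier_eq_of_linearIndependent hfg hzy hz hy]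

theorem exists_linearIndependent_pair_of_two_le_rank_span {s : Set M}
    (hs : 2 ≤ Module.rank K (Submodule.span K s)) :
    ∃ x ∈ s, ∃ y ∈ s, LinearIndependent K ![x, y] := by
  obtain ⟨b, hbs, hspan, hb⟩ := exists_linearIndependent K s
  rw [← hspan, rank_span_set hb, Cardinal.two_le_iff] at hs
  obtain ⟨x, y, hxy⟩ := hs
  refine ⟨x, hbs x.2, y, hbs y.2, ?_⟩
  convert hb.comp ![x, y] (by simpa [Function.Injective, Fin.forall_fin_two] using ⟨hxy, hxy.symm⟩)
  ext i
  fin_cases i <;> rfl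

end CommonMultiplier

section RestrictScalars

open Cardinal Module

universe u v

theorem rank_restrictScalars_eq_finrank_mul_rank (F K V : Type*) [Field F] [DivisionRing K]
    [Algebra F K] [FiniteDimensional F K] [AddCommGroup V] [Module F V] [Module K V]
    [IsScalarTower F K V] : Module.rank F V = finrank F K * Module.rank K V := by
  apply lift_injective
  rw [← lift_rank_mul_lift_rank F K V, ← finrank_eq_rank F K, lift_mul, lift_natCast, lift_natCast]

theorem lift_rank_le_lift_rank_span_range {F : Type*} (K : Type*) {V : Type u} {W : Type v}
    [Field F] [DivisionRing K] [Algebra F K] [FiniteDimensional F K]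
    [AddCommGroup V] [Module F V] [Module K V] [IsScalarTower F K V]
    [AddCommGroup W] [Module F W] [Module K W] [IsScalarTower F K W]
    {S : V →ₗ[F] W} (hS : Function.Injective S) :
    lift.{v} (Module.rank K V) ≤ lift.{u} (Module.rank K (Submodule.span K (Set.range S))) := by
  let S' : V →ₗ[F] Submodule.span K (Set.range S) :=
    S.codRestrict ((Submodule.span K (Set.range S)).restrictScalars F)
      fun x ↦ Submodule.subset_span (Set.mem_range_self x)
  have hS' : Function.Injective S' := fun x y hxy ↦ hS (congrArg Subtype.val hxy)
  have hrank := LinearMap.lift_rank_le_of_injective S' hS'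
  rwa [rank_restrictScalars_eq_finrank_mul_rank F K V,
    rank_restrictScalars_eq_finrank_mul_rank F K (Submodule.span K (Set.range S)),
    lift_mul, lift_mul, lift_natCast, lift_natCast,
    natCast_mul_le_natCast_mul finrank_pos.ne'] at hrank

end RestrictScalars

theorem real_linear_line_preserving_is_linear_or_antilinear_general {V W : Type*}
    [AddCommGroup V] [Module ℂ V] [AddCommGroup W] [Module ℂ W] (S : V →+ W)
    (hrank : 2 ≤ Module.rank ℂ (Submodule.span ℂ (Set.range S)))
    (hline : ∀ ξ : V, ∃ α : ℂ, S (Complex.I • ξ) = α • S ξ) :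
    (∀ ξ : V, S (Complex.I • ξ) = Complex.I • S ξ) ∨
    (∀ ξ : V, S (Complex.I • ξ) = (-Complex.I) • S ξ) := by
  obtain ⟨_, ⟨ξ, rfl⟩, _, ⟨η, rfl⟩, hξη⟩ := exists_linearIndependent_pair_of_two_le_rank_span hrank
  obtain ⟨α, hα⟩ : ∃ α : ℂ, ∀ ζ, S (Complex.I • ζ) = α • S ζ :=
    exists_common_multiplier (g := S.comp (DistribSMul.toAddMonoidHom V Complex.I)) hline hξη
  have hα_sq : α * α = Complex.I * Complex.I := by
    refine smul_left_injective ℂ (hξη.ne_zero 0) ?_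
    calc (α * α) • S ξ = S (Complex.I • Complex.I • ξ) := by rw [hα, hα, smul_smul]
      _ = (Complex.I * Complex.I) • S ξ := by
        rw [smul_smul, Complex.I_mul_I, neg_one_smul, neg_one_smul, map_neg]
  obtain rfl | rfl := mul_self_eq_mul_self_iff.mp hα_sq
  · exact Or.inl hα
  · exact Or.inr hα

/-- A real-linear injection of a complex Hilbert space of dimension at least 2 which maps
every complex line into a complex line is complex-linear or conjugate-linear. -/
theorem real_linear_line_preserving_is_linear_or_antilinear {W : Type*}
    [NormedAddCommGroup W] [InnerProductSpace ℂ W] [CompleteSpace W]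
    (hdim : 2 ≤ Module.rank ℂ W) (S : W →ₗ[ℝ] W) (hinj : Function.Injective S)
    (hline : ∀ ξ : W, ∃ α : ℂ, S (Complex.I • ξ) = α • S ξ) :
    (∀ ξ : W, S (Complex.I • ξ) = Complex.I • S ξ) ∨
    (∀ ξ : W, S (Complex.I • ξ) = (-Complex.I) • S ξ) :=
  real_linear_line_preserving_is_linear_or_antilinear_general S.toAddMonoidHom
    (hdim.trans (Cardinal.lift_le.mp (lift_rank_le_lift_rank_span_range ℂ hinj))) hline
end

section
/- Let H be a complex Hilbert space and define d : ℙH × ℙH → ℝ by d(L₁,L₂) = arccos(2·p(L₁,L₂) − 1), where p is the transition probability. Then d is a metric on ℙH: d(L₁,L₂) ≥ 0 with equality if and only if L₁ = L₂; d(L₁,L₂) = d(L₂,L₁); and d(L₁,L₃) ≤ d(L₁,L₂) + d(L₂,L₃) for all L₁, L₂, L₃ ∈ ℙH. -/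
open scoped InnerProductSpace

/-- The Fubini–Study distance `d(L₁, L₂) = arccos (2 p(L₁, L₂) - 1)`. -/
noncomputable def fsDist {H : Type*} [NormedAddCommGroup H] [InnerProductSpace ℂ H]
    (L₁ L₂ : Projectivization ℂ H) : ℝ :=
  Real.arccos (2 * transProb L₁ L₂ - 1)

/-!
The double-angle formula turns `d(L₁, L₂)` into twice the Hermitian angle
`arccos (|⟪x, y⟫| / (‖x‖ ‖y‖))` between representatives, which vanishes exactly in the equality
case of Cauchy–Schwarz. This angle is the minimum, over all phases `c`, of the Euclidean angle
between `x` and `c • y`. Rotating the outer two of three vectors so as to attain that minimum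
against the middle one reduces the triangle inequality to that for Euclidean angles.
-/

theorem arccos_two_mul_sq_sub_one {t : ℝ} (ht : 0 ≤ t) :
    Real.arccos (2 * t ^ 2 - 1) = 2 * Real.arccos t := by
  rcases le_total t 1 with h_le | h_ge
  · have h_acute : Real.arccos t ≤ Real.pi / 2 := Real.arccos_le_pi_div_two.2 ht
    rw [← Real.arccos_cos (x := 2 * Real.arccos t) (by linarith [Real.arccos_nonneg t])
      (by linarith), Real.cos_two_mul, Real.cos_arccos (by linarith) h_le]
  · rw [Real.arccos_eq_zero.2 h_ge, Real.arccos_eq_zero.2 (by nlinarith), mul_zero]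

section HermitianAngle

variable (𝕜 : Type*) {E : Type*} [RCLike 𝕜] [NormedAddCommGroup E] [InnerProductSpace 𝕜 E]

/-- The Hermitian angle between two vectors, that is, the angle in `[0, π / 2]` between the
`𝕜`-lines they span. It is `π / 2` if one of the vectors is zero, as for
`InnerProductGeometry.angle`. -/
noncomputable def hermitianAngle (x y : E) : ℝ :=
  Real.arccos (‖⟪x, y⟫_𝕜‖ / (‖x‖ * ‖y‖))

theorem hermitianAngle_comm (x y : E) : hermitianAngle 𝕜 x y = hermitianAngle 𝕜 y x := by
  rw [hermitianAngle, hermitianAngle, norm_inner_symm, mul_comm]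

variable {𝕜} in
theorem hermitianAngle_smul_right {c : 𝕜} (hc : c ≠ 0) (x y : E) :
    hermitianAngle 𝕜 x (c • y) = hermitianAngle 𝕜 x y := by
  rw [hermitianAngle, hermitianAngle, inner_smul_right, norm_mul, norm_smul, mul_left_comm,
    mul_div_mul_left _ _ (norm_ne_zero_iff.2 hc)]

variable {𝕜} in
theorem hermitianAngle_smul_left {c : 𝕜} (hc : c ≠ 0) (x y : E) :
    hermitianAngle 𝕜 (c • x) y = hermitianAngle 𝕜 x y := by
  rw [hermitianAngle_comm, hermitianAngle_smul_right hc, hermitianAngle_comm]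

theorem hermitianAngle_eq_zero_iff {x y : E} (hx : x ≠ 0) (hy : y ≠ 0) :
    hermitianAngle 𝕜 x y = 0 ↔ ∃ c : 𝕜, c ≠ 0 ∧ y = c • x := by
  have h_pos : 0 < ‖x‖ * ‖y‖ := mul_pos (norm_pos_iff.2 hx) (norm_pos_iff.2 hy)
  rw [hermitianAngle, Real.arccos_eq_zero, one_le_div h_pos,
    (norm_inner_le_norm x y).ge_iff_eq, norm_inner_eq_norm_iff hx hy]

theorem hermitianAngle_le_angle (x y : E) :
    letI := InnerProductSpace.rclikeToReal 𝕜 E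
    hermitianAngle 𝕜 x y ≤ InnerProductGeometry.angle x y :=
  Real.arccos_le_arccos <| div_le_div_of_nonneg_right (RCLike.re_le_norm _) (by positivity)

theorem exists_angle_smul_eq_hermitianAngle (x y : E) :
    letI := InnerProductSpace.rclikeToReal 𝕜 E
    ∃ c : 𝕜, ‖c‖ = 1 ∧ InnerProductGeometry.angle x (c • y) = hermitianAngle 𝕜 x y := by
  let := InnerProductSpace.rclikeToReal 𝕜 E
  obtain ⟨c, hc, h_phase⟩ := RCLike.exists_norm_eq_mul_self ⟪x, y⟫_𝕜
  refine ⟨c, hc, ?_⟩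
  have h_inner : ⟪x, c • y⟫_ℝ = ‖⟪x, y⟫_𝕜‖ := by
    rw [real_inner_eq_re_inner 𝕜, inner_smul_right, ← h_phase, RCLike.ofReal_re]
  rw [InnerProductGeometry.angle, hermitianAngle, h_inner, norm_smul, hc, one_mul]

theorem hermitianAngle_triangle (x y z : E) :
    hermitianAngle 𝕜 x z ≤ hermitianAngle 𝕜 x y + hermitianAngle 𝕜 y z := by
  let := InnerProductSpace.rclikeToReal 𝕜 E
  obtain ⟨a, ha, h_yx⟩ := exists_angle_smul_eq_hermitianAngle 𝕜 y x
  obtain ⟨b, hb, h_yz⟩ := exists_angle_smul_eq_hermitianAngle 𝕜 y z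
  have ha₀ : a ≠ 0 := norm_ne_zero_iff.1 (ha ▸ one_ne_zero)
  have hb₀ : b ≠ 0 := norm_ne_zero_iff.1 (hb ▸ one_ne_zero)
  calc hermitianAngle 𝕜 x z
      = hermitianAngle 𝕜 (a • x) (b • z) := by
        rw [hermitianAngle_smul_left ha₀, hermitianAngle_smul_right hb₀]
    _ ≤ InnerProductGeometry.angle (a • x) (b • z) := hermitianAngle_le_angle 𝕜 _ _
    _ ≤ InnerProductGeometry.angle (a • x) y + InnerProductGeometry.angle y (b • z) :=
        InnerProductGeometry.angle_le_angle_add_angle _ _ _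
    _ = hermitianAngle 𝕜 x y + hermitianAngle 𝕜 y z := by
        rw [InnerProductGeometry.angle_comm, h_yx, h_yz, hermitianAngle_comm]

end HermitianAngle

section FubiniStudy

variable {H : Type*} [NormedAddCommGroup H] [InnerProductSpace ℂ H]

theorem fsDist_eq_two_mul_hermitianAngle (L₁ L₂ : Projectivization ℂ H) :
    fsDist L₁ L₂ = 2 * hermitianAngle ℂ L₁.rep L₂.rep := by
  rw [fsDist, transProb, ← mul_pow, ← div_pow, arccos_two_mul_sq_sub_one (by positivity),
    hermitianAngle]

theorem fsDist_nonneg (L₁ L₂ : Projectivization ℂ H) : 0 ≤ fsDist L₁ L₂ :=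
  Real.arccos_nonneg _

theorem fsDist_eq_zero_iff (L₁ L₂ : Projectivization ℂ H) : fsDist L₁ L₂ = 0 ↔ L₁ = L₂ := by
  rw [fsDist_eq_two_mul_hermitianAngle, mul_eq_zero_iff_left two_ne_zero,
    hermitianAngle_eq_zero_iff ℂ L₁.rep_nonzero L₂.rep_nonzero]
  constructor
  · rintro ⟨c, -, h_rep⟩
    rw [← L₁.mk_rep, ← L₂.mk_rep, eq_comm, Projectivization.mk_eq_mk_iff']
    exact ⟨c, h_rep.symm⟩
  · rintro rfl
    exact ⟨1, one_ne_zero, (one_smul ℂ _).symm⟩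

theorem fsDist_comm (L₁ L₂ : Projectivization ℂ H) : fsDist L₁ L₂ = fsDist L₂ L₁ := by
  simp only [fsDist_eq_two_mul_hermitianAngle, hermitianAngle_comm ℂ L₁.rep]

theorem fsDist_triangle (L₁ L₂ L₃ : Projectivization ℂ H) :
    fsDist L₁ L₃ ≤ fsDist L₁ L₂ + fsDist L₂ L₃ := by
  simp only [fsDist_eq_two_mul_hermitianAngle]
  linarith [hermitianAngle_triangle ℂ L₁.rep L₂.rep L₃.rep]

end FubiniStudy

theorem fsDist_is_metric_general {H : Type*} [NormedAddCommGroup H] [InnerProductSpace ℂ H] :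
    (∀ L₁ L₂ : Projectivization ℂ H, 0 ≤ fsDist L₁ L₂) ∧
    (∀ L₁ L₂ : Projectivization ℂ H, fsDist L₁ L₂ = 0 ↔ L₁ = L₂) ∧
    (∀ L₁ L₂ : Projectivization ℂ H, fsDist L₁ L₂ = fsDist L₂ L₁) ∧
    (∀ L₁ L₂ L₃ : Projectivization ℂ H, fsDist L₁ L₃ ≤ fsDist L₁ L₂ + fsDist L₂ L₃) :=
  ⟨fsDist_nonneg, fsDist_eq_zero_iff, fsDist_comm, fsDist_triangle⟩

/-- `d(L₁,L₂) = arccos (2 p(L₁,L₂) - 1)` is a metric on projective Hilbert space: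
nonnegative, vanishing exactly on the diagonal, symmetric, and satisfying the
triangle inequality. -/
theorem fsDist_is_metric {H : Type*} [NormedAddCommGroup H] [InnerProductSpace ℂ H]
    [CompleteSpace H] :
    (∀ L₁ L₂ : Projectivization ℂ H, 0 ≤ fsDist L₁ L₂) ∧
    (∀ L₁ L₂ : Projectivization ℂ H, fsDist L₁ L₂ = 0 ↔ L₁ = L₂) ∧
    (∀ L₁ L₂ : Projectivization ℂ H, fsDist L₁ L₂ = fsDist L₂ L₁) ∧
    (∀ L₁ L₂ L₃ : Projectivization ℂ H, fsDist L₁ L₃ ≤ fsDist L₁ L₂ + fsDist L₂ L₃) := by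
  exact fsDist_is_metric_general
end

section
/- Let H be a complex Hilbert space with dim_ℂ H ≥ 2, and let S and S′ each be either a unitary or an antiunitary operator on H. If S and S′ induce the same map on projective space, i.e. ℂ·S(ψ) = ℂ·S′(ψ) for every nonzero ψ ∈ H, then S′ = c·S for some scalar c ∈ ℂ with |c| = 1; in particular S and S′ are of the same type (both unitary or both antiunitary). -/
open scoped InnerProductSpace

/-!
Two additive maps `f`, `g` with `f v ∈ K ∙ g v` for all `v` have the same ratio at `x` and `y` as
soon as `g x` and `g y` are linearly independent: compare coefficients in `f (x + y) = f x + f y`.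
When the range of `g` contains two independent vectors, every nonzero `g v` is independent of one of
them, so the ratio is a global constant. The comparison involves only additivity, which unitary and
antiunitary operators share, and equality of norms makes the constant a phase. Multiplying an
operator by a phase does not change its type, so the two types agree.
-/

theorem eq_smul_of_linearIndependent_pair {R V W : Type*} [Semiring R] [AddZeroClass V]
    [AddCommMonoid W] [Module R W] {f g : V →+ W} (hfg : ∀ v, f v ∈ Submodule.span R {g v})
    {x y : V} (hxy : LinearIndependent R ![g x, g y]) {a : R} (hx : f x = a • g x) :
    f y = a • g y := by
  obtain ⟨b, hb⟩ := Submodule.mem_span_singleton.mp (hfg y)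
  obtain ⟨d, hd⟩ := Submodule.mem_span_singleton.mp (hfg (x + y))
  have hsum : a • g x + b • g y = d • g x + d • g y := by
    rw [← hx, hb, ← map_add, ← hd, map_add, smul_add]
  obtain ⟨had, hbd⟩ := hxy.eq_of_pair hsum
  rw [← hb, hbd, had]

theorem linearIndependent_pair_or_of_ne_zero_s10 {K W : Type*} [DivisionRing K] [AddCommGroup W]
    [Module K W] {u v w : W} (huv : LinearIndependent K ![u, v]) (hw : w ≠ 0) :
    LinearIndependent K ![u, w] ∨ LinearIndependent K ![v, w] := by
  have hu : u ≠ 0 := huv.ne_zero 0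
  have hv : v ≠ 0 := huv.ne_zero 1
  rw [LinearIndependent.pair_iff' hu, LinearIndependent.pair_iff' hv]
  by_contra! hdep
  obtain ⟨⟨a, ha⟩, b, hb⟩ := hdep
  obtain ⟨rfl, -⟩ := huv.eq_zero_of_pair' (ha.trans hb.symm)
  exact hw (by rw [← ha, zero_smul])

theorem exists_forall_eq_smul_of_forall_mem_span_singleton {K V W : Type*} [DivisionRing K]
    [AddZeroClass V] [AddCommGroup W] [Module K W] {f g : V →+ W}
    (hfg : ∀ v, f v ∈ Submodule.span K {g v}) {x y : V} (hxy : LinearIndependent K ![g x, g y]) :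
    ∃ c : K, ∀ v, f v = c • g v := by
  obtain ⟨c, hcx⟩ := Submodule.mem_span_singleton.mp (hfg x)
  have hcy : f y = c • g y := eq_smul_of_linearIndependent_pair hfg hxy hcx.symm
  refine ⟨c, fun v => ?_⟩
  rcases eq_or_ne (g v) 0 with hgv | hgv
  · have hfv : f v = 0 := by simpa [hgv] using hfg v
    rw [hfv, hgv, smul_zero]
  · rcases linearIndependent_pair_or_of_ne_zero_s10 hxy hgv with hxv | hyv
    · exact eq_smul_of_linearIndependent_pair hfg hxv hcx.symm
    · exact eq_smul_of_linearIndependent_pair hfg hyv hcy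

theorem exists_norm_eq_one_forall_eq_smul_of_norm_eq {K V W : Type*} [NormedDivisionRing K]
    [AddZeroClass V] [NormedAddCommGroup W] [Module K W] [NormSMulClass K W] {f g : V →+ W}
    (hfg : ∀ v, f v ∈ Submodule.span K {g v}) {x y : V} (hxy : LinearIndependent K ![g x, g y])
    (hnorm : ‖f x‖ = ‖g x‖) :
    ∃ c : K, ‖c‖ = 1 ∧ ∀ v, f v = c • g v := by
  obtain ⟨c, hc⟩ := exists_forall_eq_smul_of_forall_mem_span_singleton hfg hxy
  have hgx : ‖g x‖ ≠ 0 := norm_ne_zero_iff.mpr (hxy.ne_zero 0)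
  have hmul : ‖c‖ * ‖g x‖ = ‖g x‖ := by rw [← norm_smul, ← hc, hnorm]
  exact ⟨c, (mul_eq_right₀ hgx).mp hmul, hc⟩

theorem exists_linearIndependent_pair_of_two_le_rank {K W : Type*} [DivisionRing K]
    [AddCommGroup W] [Module K W] (hdim : 2 ≤ Module.rank K W) :
    ∃ u v : W, LinearIndependent K ![u, v] := by
  have hrank : 1 < Module.rank K W := Cardinal.one_lt_two.trans_le hdim
  obtain ⟨u, hu⟩ := rank_pos_iff_exists_ne_zero.mp (zero_lt_one.trans hrank)
  exact ⟨u, exists_linearIndependent_pair_of_one_lt_rank hrank hu⟩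

theorem inner_smul_smul_of_norm_eq_one {𝕜 E : Type*} [RCLike 𝕜] [SeminormedAddCommGroup E]
    [InnerProductSpace 𝕜 E] {c : 𝕜} (hc : ‖c‖ = 1) (x y : E) : ⟪c • x, c • y⟫_𝕜 = ⟪x, y⟫_𝕜 := by
  rw [inner_smul_left, inner_smul_right, ← mul_assoc, RCLike.conj_mul, hc, RCLike.ofReal_one,
    one_pow, one_mul]

section Operators

variable {H : Type*} [NormedAddCommGroup H] [InnerProductSpace ℂ H] {S : H → H}

theorem IsUnitaryOp.norm_map (hS : IsUnitaryOp S) (ψ : H) : ‖S ψ‖ = ‖ψ‖ := by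
  rw [norm_eq_sqrt_re_inner (𝕜 := ℂ), hS.2.2.2, ← norm_eq_sqrt_re_inner]

theorem IsAntiunitaryOp.norm_map (hS : IsAntiunitaryOp S) (ψ : H) : ‖S ψ‖ = ‖ψ‖ := by
  rw [norm_eq_sqrt_re_inner (𝕜 := ℂ), hS.2.2.2, inner_conj_symm, ← norm_eq_sqrt_re_inner]

theorem IsUnitaryOp.const_smul (hS : IsUnitaryOp S) {c : ℂ} (hc : ‖c‖ = 1) :
    IsUnitaryOp (c • S) := by
  obtain ⟨hbij, hadd, hsmul, hinner⟩ := hS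
  have hc0 : c ≠ 0 := norm_ne_zero_iff.mp (hc ▸ one_ne_zero)
  refine ⟨(IsUnit.mk0 c hc0).smul_bijective.comp hbij, fun ψ₁ ψ₂ => ?_,
    fun a ψ => ?_, fun ψ₁ ψ₂ => ?_⟩
  · simp only [Pi.smul_apply, hadd, smul_add]
  · simp only [Pi.smul_apply, hsmul, smul_comm c]
  · simp only [Pi.smul_apply, inner_smul_smul_of_norm_eq_one hc, hinner]

theorem IsAntiunitaryOp.const_smul (hS : IsAntiunitaryOp S) {c : ℂ} (hc : ‖c‖ = 1) :
    IsAntiunitaryOp (c • S) := by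
  obtain ⟨hbij, hadd, hsmul, hinner⟩ := hS
  have hc0 : c ≠ 0 := norm_ne_zero_iff.mp (hc ▸ one_ne_zero)
  refine ⟨(IsUnit.mk0 c hc0).smul_bijective.comp hbij, fun ψ₁ ψ₂ => ?_,
    fun a ψ => ?_, fun ψ₁ ψ₂ => ?_⟩
  · simp only [Pi.smul_apply, hadd, smul_add]
  · simp only [Pi.smul_apply, hsmul, smul_comm c]
  · simp only [Pi.smul_apply, inner_smul_smul_of_norm_eq_one hc, hinner]

theorem map_add_of_isUnitaryOp_or_isAntiunitaryOp (hS : IsUnitaryOp S ∨ IsAntiunitaryOp S)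
    (ψ₁ ψ₂ : H) : S (ψ₁ + ψ₂) = S ψ₁ + S ψ₂ :=
  hS.elim (·.2.1 ψ₁ ψ₂) (·.2.1 ψ₁ ψ₂)

theorem norm_map_of_isUnitaryOp_or_isAntiunitaryOp (hS : IsUnitaryOp S ∨ IsAntiunitaryOp S)
    (ψ : H) : ‖S ψ‖ = ‖ψ‖ :=
  hS.elim (·.norm_map ψ) (·.norm_map ψ)

end Operators

theorem eq_up_to_phase_of_same_projective_action_general {H : Type*} [NormedAddCommGroup H]
    [InnerProductSpace ℂ H] (hdim : 2 ≤ Module.rank ℂ H) {S S' : H → H}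
    (hS : IsUnitaryOp S ∨ IsAntiunitaryOp S)
    (hadd' : ∀ ψ₁ ψ₂, S' (ψ₁ + ψ₂) = S' ψ₁ + S' ψ₂) (hnorm' : ∀ ψ, ‖S' ψ‖ = ‖ψ‖)
    (hsame : ∀ ψ : H, ψ ≠ 0 → S' ψ ∈ Submodule.span ℂ {S ψ}) :
    ∃ c : ℂ, ‖c‖ = 1 ∧ (∀ ψ : H, S' ψ = c • S ψ) ∧
      ((IsUnitaryOp S ∧ IsUnitaryOp S') ∨ (IsAntiunitaryOp S ∧ IsAntiunitaryOp S')) := by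
  let g : H →+ H := AddMonoidHom.mk' S (map_add_of_isUnitaryOp_or_isAntiunitaryOp hS)
  let f : H →+ H := AddMonoidHom.mk' S' hadd'
  have hsurj : Function.Surjective g := hS.elim (·.1.surjective) (·.1.surjective)
  have hfg : ∀ ψ, f ψ ∈ Submodule.span ℂ {g ψ} := fun ψ => by
    rcases eq_or_ne ψ 0 with rfl | hψ
    · rw [map_zero f]
      exact Submodule.zero_mem _
    · exact hsame ψ hψ
  obtain ⟨u, v, huv⟩ := exists_linearIndependent_pair_of_two_le_rank hdim
  obtain ⟨x, rfl⟩ := hsurj u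
  obtain ⟨y, rfl⟩ := hsurj v
  have hnorm : ‖f x‖ = ‖g x‖ :=
    (hnorm' x).trans (norm_map_of_isUnitaryOp_or_isAntiunitaryOp hS x).symm
  obtain ⟨c, hc, hcS⟩ := exists_norm_eq_one_forall_eq_smul_of_norm_eq hfg huv hnorm
  obtain rfl : S' = c • S := funext hcS
  exact ⟨c, hc, hcS, hS.imp (fun hU => ⟨hU, hU.const_smul hc⟩) fun hA => ⟨hA, hA.const_smul hc⟩⟩

/-- Two unitary-or-antiunitary operators inducing the same map on projective space
differ by a unit-modulus scalar; in particular they are of the same type. -/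
theorem eq_up_to_phase_of_same_projective_action {H : Type*} [NormedAddCommGroup H]
    [InnerProductSpace ℂ H] [CompleteSpace H] (hdim : 2 ≤ Module.rank ℂ H)
    (S S' : H → H)
    (hS : IsUnitaryOp S ∨ IsAntiunitaryOp S) (hS' : IsUnitaryOp S' ∨ IsAntiunitaryOp S')
    (hsame : ∀ ψ : H, ψ ≠ 0 →
      Submodule.span ℂ {S ψ} = Submodule.span ℂ {S' ψ}) :
    ∃ c : ℂ, ‖c‖ = 1 ∧ (∀ ψ : H, S' ψ = c • S ψ) ∧
      ((IsUnitaryOp S ∧ IsUnitaryOp S') ∨ (IsAntiunitaryOp S ∧ IsAntiunitaryOp S')) :=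
  eq_up_to_phase_of_same_projective_action_general hdim hS
    (map_add_of_isUnitaryOp_or_isAntiunitaryOp hS') (norm_map_of_isUnitaryOp_or_isAntiunitaryOp hS')
    fun ψ hψ => hsame ψ hψ ▸ Submodule.mem_span_singleton_self _
end
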